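/- arXiv:2107.14798 — 2 statements merged into one kernel-verified Lean document; each statement's English description precedes it below -/
import Mathlib

section
/- Let n ≥ k > r ≥ 2 be integers and let L ⊆ {0,1,…,C(k,r)} be a 3-good list. Then f(n,r,k,L) ≤ 2^{2k·n^{r−1} + n^{r−1}·log₂ n}. -/
open Finset

/-- The family of all `r`-graphs on `[n]`: sets of `r`-element subsets of `Fin n`. -/
def rGraphs (n r : ℕ) : Finset (Finset (Finset (Fin n))) :=
  (Finset.univ.powersetCard r).powerset

/-- `G` is `(L,k)`-free: for every `k`-element vertex set `S`, the number of edges of `G`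
contained in `S` does not belong to `L`. -/
def IsLKFree (n k : ℕ) (L : Finset ℕ) (G : Finset (Finset (Fin n))) : Prop :=
  ∀ S : Finset (Fin n), S.card = k → (G.filter (fun e => e ⊆ S)).card ∉ L

instance (n k : ℕ) (L : Finset ℕ) : DecidablePred (IsLKFree n k L) := fun G =>
  inferInstanceAs (Decidable (∀ S : Finset (Fin n), S.card = k →
    (G.filter (fun e => e ⊆ S)).card ∉ L))

/-- `f(n,r,k,L)`: the number of `(L,k)`-free `r`-graphs on `[n]`. -/
def numFree (n r k : ℕ) (L : Finset ℕ) : ℕ :=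
  ((rGraphs n r).filter (IsLKFree n k L)).card

/-- `L` is 3-good: the complement of `L` in `{0,…,C(k,r)}` contains no 3 consecutive integers. -/
def ThreeGood (k r : ℕ) (L : Finset ℕ) : Prop :=
  ∀ i : ℕ, i + 2 ≤ Nat.choose k r → ({i, i + 1, i + 2} : Finset ℕ) ∩ L ≠ ∅


/-- Order-shattered sets of a family along a list of elements. -/
def osh {α : Type*} [DecidableEq α] : List α → Finset (Finset α) → Finset (Finset α)
  | [], F => if F.Nonempty then {∅} else ∅
  | a :: l, F =>
      (osh l (F.filter (fun G => a ∉ G)) ∪ osh l (F.filter (fun G => a ∈ G))) ∪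
      (osh l (F.filter (fun G => a ∉ G)) ∩ osh l (F.filter (fun G => a ∈ G))).image (insert a)

lemma osh_sub {α : Type*} [DecidableEq α] (l : List α) : ∀ (F : Finset (Finset α)),
    ∀ H ∈ osh l F, ∀ x ∈ H, x ∈ l := by
  induction l with
  | nil =>
    intro F H hH x hx
    simp only [osh] at hH
    split_ifs at hH <;> simp_all
  | cons a l ih =>
    intro F H hH x hx
    simp only [osh, mem_union, mem_image, mem_inter] at hH
    rcases hH with (h | h) | ⟨K, ⟨h, _⟩, rfl⟩
    · exact List.mem_cons_of_mem _ (ih _ _ h x hx)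
    · exact List.mem_cons_of_mem _ (ih _ _ h x hx)
    · rcases mem_insert.1 hx with rfl | hx
      · exact List.mem_cons_self
      · exact List.mem_cons_of_mem _ (ih _ _ h x hx)

lemma osh_nonempty {α : Type*} [DecidableEq α] (l : List α) : ∀ (F : Finset (Finset α)),
    ∀ H ∈ osh l F, F.Nonempty := by
  induction l with
  | nil =>
    intro F H hH
    simp only [osh] at hH
    split_ifs at hH with h
    · exact h
    · simp at hH
  | cons a l ih =>
    intro F H hH
    simp only [osh, mem_union, mem_image, mem_inter] at hH
    rcases hH with (h | h) | ⟨K, ⟨h, _⟩, rfl⟩ <;>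
    exact (ih _ _ h).mono (filter_subset _ _)

lemma osh_card {α : Type*} [DecidableEq α] (l : List α) (hl : l.Nodup) :
    ∀ (F : Finset (Finset α)),
    (∀ G ∈ F, ∀ G' ∈ F, (∀ x ∈ l, (x ∈ G ↔ x ∈ G')) → G = G') →
    F.card ≤ (osh l F).card := by
  induction l with
  | nil =>
    intro F hF
    have h1 : F.card ≤ 1 := card_le_one.2 fun G hG G' hG' => hF G hG G' hG' (by simp)
    simp only [osh]
    split_ifs with h
    · simpa using h1
    · rw [not_nonempty_iff_eq_empty] at h
      simp [h]
  | cons a l ih =>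
    intro F hF
    obtain ⟨hal, hl⟩ := List.nodup_cons.1 hl
    have h0 := ih hl (F.filter (fun G => a ∉ G)) (by
      intro G hG G' hG' h
      rw [mem_filter] at hG hG'
      apply hF G hG.1 G' hG'.1
      intro x hx
      rcases List.mem_cons.1 hx with rfl | hx
      · simp [hG.2, hG'.2]
      · exact h x hx)
    have h1 := ih hl (F.filter (fun G => a ∈ G)) (by
      intro G hG G' hG' h
      rw [mem_filter] at hG hG'
      apply hF G hG.1 G' hG'.1
      intro x hx
      rcases List.mem_cons.1 hx with rfl | hx
      · simp [hG.2, hG'.2]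
      · exact h x hx)
    have hs := card_filter_add_card_filter_not (s := F) (fun G => a ∈ G)
    simp only [osh]
    have n0 := osh_sub l (F.filter (fun G => a ∉ G))
    have n1 := osh_sub l (F.filter (fun G => a ∈ G))
    generalize osh l (F.filter (fun G => a ∉ G)) = S0 at *
    generalize osh l (F.filter (fun G => a ∈ G)) = S1 at *
    have hd : Disjoint (S0 ∪ S1) ((S0 ∩ S1).image (insert a)) := by
      rw [disjoint_left]
      intro K hK hK'
      obtain ⟨K', _, rfl⟩ := mem_image.1 hK'
      rcases mem_union.1 hK with h | h
      · exact hal (n0 _ h a (mem_insert_self _ _))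
      · exact hal (n1 _ h a (mem_insert_self _ _))
    have hi : ((S0 ∩ S1).image (insert a)).card = (S0 ∩ S1).card := by
      apply card_image_of_injOn
      intro K hK K' hK' h
      have hK := n0 _ (mem_inter.1 (mem_coe.1 hK)).1
      have hK' := n0 _ (mem_inter.1 (mem_coe.1 hK')).1
      have e1 : a ∉ K := fun h => hal (hK a h)
      have e2 : a ∉ K' := fun h => hal (hK' a h)
      have := congrArg (fun s => s.erase a) h
      simpa [erase_insert e1, erase_insert e2] using this
    rw [card_union_of_disjoint hd, hi, card_union_add_card_inter]
    omega

lemma osh_one {α : Type*} [DecidableEq α] (R : α → α → Prop) (hR : ∀ a b, R a b → ¬ R b a)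
    (l : List α) (hl : l.Pairwise R) :
    ∀ (F : Finset (Finset α)), ∀ H ∈ osh l F, ∀ e ∈ H,
    ∃ G0 ∈ F, ∃ G1 ∈ F, e ∉ G0 ∧ e ∈ G1 ∧ ∀ x ∈ l, R x e → (x ∈ G0 ↔ x ∈ G1) := by
  have irr : ∀ a, ¬ R a a := fun a h => hR a a h h
  induction l with
  | nil =>
    intro F H hH e he
    exact absurd (osh_sub _ _ _ hH e he) (by simp)
  | cons a l ih =>
    intro F H hH e he
    obtain ⟨hal, hl⟩ := List.pairwise_cons.1 hl
    simp only [osh, mem_union, mem_image, mem_inter] at hH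
    rcases hH with (h | h) | ⟨K, ⟨h, h'⟩, rfl⟩
    · obtain ⟨G0, h0, G1, h1, q0, q1, q⟩ := ih hl _ _ h e he
      rw [mem_filter] at h0 h1
      refine ⟨G0, h0.1, G1, h1.1, q0, q1, ?_⟩
      intro x hx hxe
      rcases List.mem_cons.1 hx with rfl | hx
      · simp [h0.2, h1.2]
      · exact q x hx hxe
    · obtain ⟨G0, h0, G1, h1, q0, q1, q⟩ := ih hl _ _ h e he
      rw [mem_filter] at h0 h1
      refine ⟨G0, h0.1, G1, h1.1, q0, q1, ?_⟩
      intro x hx hxe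
      rcases List.mem_cons.1 hx with rfl | hx
      · simp [h0.2, h1.2]
      · exact q x hx hxe
    · by_cases hea : e = a
      · subst hea
        obtain ⟨G0, h0⟩ := osh_nonempty _ _ _ h
        obtain ⟨G1, h1⟩ := osh_nonempty _ _ _ h'
        rw [mem_filter] at h0 h1
        refine ⟨G0, h0.1, G1, h1.1, h0.2, h1.2, ?_⟩
        intro x hx hxe
        rcases List.mem_cons.1 hx with rfl | hx
        · exact absurd hxe (irr _)
        · exact absurd hxe (hR _ _ (hal x hx))
      · obtain ⟨G0, h0, G1, h1, q0, q1, q⟩ := ih hl _ _ h e (mem_of_mem_insert_of_ne he hea)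
        rw [mem_filter] at h0 h1
        refine ⟨G0, h0.1, G1, h1.1, q0, q1, ?_⟩
        intro x hx hxe
        rcases List.mem_cons.1 hx with rfl | hx
        · simp [h0.2, h1.2]
        · exact q x hx hxe

lemma osh_two {α : Type*} [DecidableEq α] (R : α → α → Prop) (hR : ∀ a b, R a b → ¬ R b a)
    (hT : ∀ a b c, R a b → R b c → R a c)
    (l : List α) (hl : l.Pairwise R) :
    ∀ (F : Finset (Finset α)), ∀ H ∈ osh l F, ∀ d ∈ H, ∀ e ∈ H, R d e →
    ∃ G0 ∈ F, ∃ G1 ∈ F, ∃ G2 ∈ F, (d ∉ G0 ∧ e ∉ G0) ∧ (d ∉ G1 ∧ e ∈ G1) ∧ (d ∈ G2 ∧ e ∈ G2) ∧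
      ∀ x ∈ l, R x d → (x ∈ G0 ↔ x ∈ G1) ∧ (x ∈ G0 ↔ x ∈ G2) := by
  have irr : ∀ a, ¬ R a a := fun a h => hR a a h h
  induction l with
  | nil =>
    intro F H hH e he
    exact absurd (osh_sub _ _ _ hH e he) (by simp)
  | cons a l ih =>
    intro F H hH d hd e he hde
    obtain ⟨hal, hl2⟩ := List.pairwise_cons.1 hl
    simp only [osh, mem_union, mem_image, mem_inter] at hH
    rcases hH with (h | h) | ⟨K, ⟨h, h'⟩, rfl⟩
    · obtain ⟨G0, h0, G1, h1, G2, h2, q0, q1, q2, q⟩ := ih hl2 _ _ h d hd e he hde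
      rw [mem_filter] at h0 h1 h2
      refine ⟨G0, h0.1, G1, h1.1, G2, h2.1, q0, q1, q2, ?_⟩
      intro x hx hxe
      rcases List.mem_cons.1 hx with rfl | hx
      · simp [h0.2, h1.2, h2.2]
      · exact q x hx hxe
    · obtain ⟨G0, h0, G1, h1, G2, h2, q0, q1, q2, q⟩ := ih hl2 _ _ h d hd e he hde
      rw [mem_filter] at h0 h1 h2
      refine ⟨G0, h0.1, G1, h1.1, G2, h2.1, q0, q1, q2, ?_⟩
      intro x hx hxe
      rcases List.mem_cons.1 hx with rfl | hx
      · simp [h0.2, h1.2, h2.2]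
      · exact q x hx hxe
    · by_cases hda : d = a
      · subst hda
        have hed : e ≠ d := by
          rintro rfl
          exact irr _ hde
        have heK := mem_of_mem_insert_of_ne he hed
        obtain ⟨G0, h0, G1, h1, q0, q1, -⟩ := osh_one R hR l hl2 _ _ h e heK
        obtain ⟨G3, h3, G2, h2, q3, q2, -⟩ := osh_one R hR l hl2 _ _ h' e heK
        rw [mem_filter] at h0 h1 h2
        refine ⟨G0, h0.1, G1, h1.1, G2, h2.1, ⟨h0.2, q0⟩, ⟨h1.2, q1⟩, ⟨h2.2, q2⟩, ?_⟩
        intro x hx hxe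
        rcases List.mem_cons.1 hx with rfl | hx
        · exact absurd hxe (irr _)
        · exact absurd hxe (hR _ _ (hal x hx))
      · have hdK := mem_of_mem_insert_of_ne hd hda
        have hea : e ≠ a := by
          rintro rfl
          exact hR _ _ hde (hal d (osh_sub _ _ _ h d hdK))
        obtain ⟨G0, h0, G1, h1, G2, h2, q0, q1, q2, q⟩ :=
          ih hl2 _ _ h d hdK e (mem_of_mem_insert_of_ne he hea) hde
        rw [mem_filter] at h0 h1 h2
        refine ⟨G0, h0.1, G1, h1.1, G2, h2.1, q0, q1, q2, ?_⟩
        intro x hx hxe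
        rcases List.mem_cons.1 hx with rfl | hx
        · simp [h0.2, h1.2, h2.2]
        · exact q x hx hxe

/-- Strict colex order, reversed. -/
def RC {n : ℕ} (a b : Finset (Fin n)) : Prop := toColex b < toColex a

lemma exists_list (n r : ℕ) : ∃ l : List (Finset (Fin n)), l.Pairwise RC ∧
    ∀ e, e ∈ l ↔ e.card = r := by
  refine ⟨((((univ : Finset (Fin n)).powersetCard r).image toColex).sort (· ≥ ·)).map ofColex,
    ?_, ?_⟩
  · rw [List.pairwise_map]
    have h := Finset.sortedGT_sort (((univ : Finset (Fin n)).powersetCard r).image toColex)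
    exact h.pairwise
  · intro e
    simp [mem_powersetCard]

lemma colex_key {n : ℕ} (A B : Finset (Fin n)) (x y : Fin n)
    (hA : ∀ a ∈ A, a < x) (hxy : x < y) (hB : ∀ b ∈ B, y < b) (e : Finset (Fin n))
    (hc : e.card = A.card + 1) (hsub : e ⊆ insert x (insert y A) ∪ B)
    (h1 : e ≠ insert x A) (h2 : e ≠ insert y A) : RC e (insert y A) := by
  have hxA : x ∉ A := fun h => lt_irrefl _ (hA x h)
  have hyA : y ∉ A := fun h => lt_asymm (hA y h) hxy
  unfold RC
  rw [Colex.toColex_lt_toColex]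
  refine ⟨h2.symm, ?_⟩
  intro a ha hae
  rcases mem_insert.1 ha with rfl | ha
  · by_contra hcon
    push Not at hcon
    apply h1
    apply eq_of_subset_of_card_le
    · intro z hz
      have := hsub hz
      simp only [mem_union, mem_insert] at this
      rcases this with (h | h | h) | h
      · simp [h]
      · subst h
        exact absurd hz hae
      · simp [h]
      · have h3 := hB z h
        have h4 : z ∉ insert a A := by
          rw [mem_insert]
          rintro (h | h)
          · exact absurd h h3.ne'
          · exact lt_asymm (hA z h) (hxy.trans h3)
        exact absurd (hcon z hz h4) (not_lt.2 h3.le)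
    · rw [hc, card_insert_of_notMem hxA]
  · obtain ⟨b, hb, hb'⟩ : ∃ b ∈ e, b ∉ insert y A := by
      by_contra hcon
      push Not at hcon
      exact h2 (eq_of_subset_of_card_le hcon (by rw [hc, card_insert_of_notMem hyA]))
    refine ⟨b, hb, hb', ?_⟩
    have := hsub hb
    simp only [mem_union, mem_insert] at this hb'
    push Not at hb'
    rcases this with (h | h | h) | h
    · subst h
      exact (hA a ha).le
    · exact absurd h hb'.1
    · exact absurd h hb'.2
    · exact ((hA a ha).trans (hxy.trans (hB b h))).le

/-- top vertices -/
def topV (n m : ℕ) : Finset (Fin n) := univ.filter (fun v => m ≤ (v : ℕ))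

lemma topV_card (n m : ℕ) : (topV n m).card = n - m := by
  have : (topV n m).map Fin.valEmbedding = Finset.Ico m n := by
    ext i
    simp only [topV, mem_map, mem_filter, mem_univ, true_and, Fin.valEmbedding_apply, mem_Ico]
    constructor
    · rintro ⟨v, hv, rfl⟩
      exact ⟨hv, v.2⟩
    · rintro ⟨h1, h2⟩
      exact ⟨⟨i, h2⟩, h1, rfl⟩
  rw [← card_map, this, Nat.card_Ico]

lemma key_no_pair (n r k : ℕ) (hr : 2 ≤ r) (hk : r < k) (hn : k ≤ n)
    (L : Finset ℕ) (hgood : ThreeGood k r L) (l : List (Finset (Fin n)))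
    (hl : l.Pairwise RC) (hlm : ∀ e, e ∈ l ↔ e.card = r) (H : Finset (Finset (Fin n)))
    (hH : H ∈ osh l ((rGraphs n r).filter (IsLKFree n k L)))
    (A : Finset (Fin n)) (hAc : A.card = r - 1) (x y : Fin n) (hA : ∀ a ∈ A, a < x)
    (hxy : x < y) (hy : (y : ℕ) < n - (k - r - 1))
    (hx1 : insert x A ∈ H) (hy1 : insert y A ∈ H) : False := by
  have hxA : x ∉ A := fun h => lt_irrefl _ (hA x h)
  have hyA : y ∉ A := fun h => lt_asymm (hA y h) hxy
  set B := topV n (n - (k - r - 1)) with hBdef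
  have hB : ∀ b ∈ B, y < b := by
    intro b hb
    simp only [hBdef, topV, mem_filter, mem_univ, true_and] at hb
    exact Fin.lt_def.2 (by omega)
  have hBc : B.card = k - r - 1 := by
    rw [hBdef, topV_card]
    omega
  set S := insert x (insert y A) ∪ B with hS
  have hx' : x ∉ insert y A := by
    rw [mem_insert]
    rintro (h | h)
    · exact hxy.ne h
    · exact hxA h
  have hSc : S.card = k := by
    rw [hS, card_union_of_disjoint, card_insert_of_notMem hx', card_insert_of_notMem hyA, hBc, hAc]
    · omega
    · rw [disjoint_left]
      intro z hz hzB
      have h3 := hB z hzB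
      simp only [mem_insert] at hz
      rcases hz with h | h | h
      · subst h
        exact lt_asymm hxy h3
      · subst h
        exact lt_irrefl _ h3
      · exact lt_asymm (hA z h) (hxy.trans h3)
  have hne : insert x A ≠ insert y A := by
    intro h
    have : x ∈ insert y A := h ▸ mem_insert_self x A
    exact hx' this
  have hR : RC (insert y A) (insert x A) := by
    unfold RC
    rw [Colex.toColex_lt_toColex]
    refine ⟨hne, ?_⟩
    intro a ha ha'
    refine ⟨y, mem_insert_self _ _, ?_, ?_⟩
    · rw [mem_insert]
      rintro (h | h)
      · exact hxy.ne h.symm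
      · exact hyA h
    · rcases mem_insert.1 ha with rfl | h
      · exact hxy.le
      · exact ((hA a h).trans hxy).le
  obtain ⟨G0, h0, G1, h1, G2, h2, q0, q1, q2, q⟩ := osh_two RC
    (fun a b h h' => lt_asymm h h') (fun a b c h h' => lt_trans h' h) l hl _ H hH
    (insert y A) hy1 (insert x A) hx1 hR
  simp only [mem_filter, rGraphs, mem_powerset] at h0 h1 h2
  have hxS : insert x A ⊆ S := by
    intro z hz
    simp only [hS, mem_union, mem_insert] at hz ⊢
    tauto
  have hyS : insert y A ⊆ S := by
    intro z hz
    simp only [hS, mem_union, mem_insert] at hz ⊢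
    tauto
  -- common part
  set C := G0.filter (fun e => e ⊆ S) with hC
  have agree : ∀ e, e.card = r → e ⊆ S → e ≠ insert x A → e ≠ insert y A →
      (e ∈ G0 ↔ e ∈ G1) ∧ (e ∈ G0 ↔ e ∈ G2) := by
    intro e hec heS hex hey
    exact q e ((hlm e).2 hec) (colex_key A B x y hA hxy hB e (by omega) heS hex hey)
  have cr : ∀ {G : Finset (Finset (Fin n))}, G ⊆ powersetCard r univ → ∀ e ∈ G, e.card = r :=
    fun hG e he => (mem_powersetCard.1 (hG he)).2
  have hxr : (insert x A).card = r := by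
    rw [card_insert_of_notMem hxA]
    omega
  have hyr : (insert y A).card = r := by
    rw [card_insert_of_notMem hyA]
    omega
  have e1 : G1.filter (fun e => e ⊆ S) = insert (insert x A) C := by
    ext e
    simp only [hC, mem_filter, mem_insert (a := e)]
    by_cases c1 : e = insert x A
    · simp only [c1, true_or, iff_true]
      exact ⟨q1.2, hxS⟩
    by_cases c2 : e = insert y A
    · subst c2
      simp [q1.1, q0.1, hne.symm]
    constructor
    · rintro ⟨g, s⟩
      exact Or.inr ⟨((agree e (cr h1.1 e g) s c1 c2).1).2 g, s⟩
    · rintro (g | ⟨g, s⟩)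
      · exact absurd g c1
      · exact ⟨((agree e (cr h0.1 e g) s c1 c2).1).1 g, s⟩
  have e2 : G2.filter (fun e => e ⊆ S) = insert (insert y A) (insert (insert x A) C) := by
    ext e
    simp only [hC, mem_filter, mem_insert (a := e)]
    by_cases c1 : e = insert x A
    · simp only [c1, true_or, or_true, iff_true]
      exact ⟨q2.2, hxS⟩
    by_cases c2 : e = insert y A
    · simp only [c2, true_or, iff_true]
      exact ⟨q2.1, hyS⟩
    constructor
    · rintro ⟨g, s⟩
      exact Or.inr (Or.inr ⟨((agree e (cr h2.1 e g) s c1 c2).2).2 g, s⟩)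
    · rintro (g | g | ⟨g, s⟩)
      · exact absurd g c2
      · exact absurd g c1
      · exact ⟨((agree e (cr h0.1 e g) s c1 c2).2).1 g, s⟩
  have nx : insert x A ∉ C := fun h => q0.2 (mem_filter.1 h).1
  have ny : insert y A ∉ insert (insert x A) C := by
    rw [mem_insert]
    rintro (h | h)
    · exact hne h.symm
    · exact q0.1 (mem_filter.1 h).1
  have f0 := h0.2 S hSc
  have f1 := h1.2 S hSc
  have f2 := h2.2 S hSc
  rw [e1, card_insert_of_notMem nx] at f1
  have hle : C.card + 2 ≤ Nat.choose k r := by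
    have : (G2.filter (fun e => e ⊆ S)).card ≤ (S.powersetCard r).card := by
      apply card_le_card
      intro e he
      rw [mem_filter] at he
      exact mem_powersetCard.2 ⟨he.2, cr h2.1 e he.1⟩
    rw [card_powersetCard, hSc, e2, card_insert_of_notMem ny, card_insert_of_notMem nx] at this
    exact this
  rw [e2, card_insert_of_notMem ny, card_insert_of_notMem nx] at f2
  apply hgood _ hle
  rw [← not_nonempty_iff_eq_empty]
  rintro ⟨z, hz⟩
  simp only [mem_inter, mem_insert, mem_singleton] at hz
  rcases hz with ⟨rfl | rfl | rfl, hz⟩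
  · exact f0 hz
  · exact f1 hz
  · exact f2 hz

/-- allowed neighbourhoods -/
def TT (n m : ℕ) : Finset (Finset (Fin n)) :=
  univ.filter (fun X => (X.filter (fun v : Fin n => (v : ℕ) < m)).card ≤ 1)

lemma TT_card (n m : ℕ) : (TT n m).card ≤ (n + 1) * 2 ^ (n - m) := by
  have hsub : TT n m ⊆ ((insert ∅ ((univ : Finset (Fin n)).image (fun v => ({v} : Finset (Fin n))))) ×ˢ
      (topV n m).powerset).image (fun p => p.1 ∪ p.2) := by
    intro X hX
    simp only [TT, mem_filter, mem_univ, true_and] at hX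
    rw [mem_image]
    refine ⟨(X.filter (fun v : Fin n => (v : ℕ) < m), X.filter (fun v : Fin n => ¬ (v : ℕ) < m)), ?_, ?_⟩
    · rw [mem_product]
      constructor
      · rcases Nat.le_one_iff_eq_zero_or_eq_one.1 hX with h | h
        · rw [card_eq_zero] at h
          simp only [h, mem_insert, true_or]
        · obtain ⟨v, hv⟩ := card_eq_one.1 h
          simp [hv]
      · rw [mem_powerset]
        intro v hv
        simp only [topV, mem_filter, mem_univ, true_and] at hv ⊢
        omega
    · exact filter_union_filter_not_eq _ _
  refine (card_le_card hsub).trans (card_image_le.trans ?_)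
  rw [card_product, card_powerset, topV_card]
  apply Nat.mul_le_mul_right
  refine (card_insert_le _ _).trans ?_
  have : ((univ : Finset (Fin n)).image (fun v => ({v} : Finset (Fin n)))).card ≤ n := by
    simpa using card_image_le (s := (univ : Finset (Fin n))) (f := fun v => ({v} : Finset (Fin n)))
  omega

lemma family_card (n r m : ℕ) (hr : 2 ≤ r) (Q : Finset (Finset (Finset (Fin n))))
    (hc : ∀ H ∈ Q, ∀ e ∈ H, e.card = r)
    (hQ : ∀ H ∈ Q, ∀ A : Finset (Fin n), A.card = r - 1 → ∀ x y : Fin n, (∀ a ∈ A, a < x) →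
      x < y → (y : ℕ) < m → insert x A ∈ H → insert y A ∈ H → False) :
    Q.card ≤ (TT n m).card ^ (n.choose (r - 1)) := by
  classical
  let P := (univ : Finset (Fin n)).powersetCard (r - 1)
  let Φ : Finset (Finset (Fin n)) → (P → Finset (Fin n)) :=
    fun H A => univ.filter (fun x => (∀ a ∈ A.1, a < x) ∧ insert x A.1 ∈ H)
  have hP : Fintype.card P = n.choose (r - 1) := by
    simp [P]
  have : ((TT n m).card) ^ (n.choose (r - 1)) = (Fintype.piFinset (fun _ : P => TT n m)).card := by
    simp [Fintype.card_piFinset, P]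
  rw [this]
  apply card_le_card_of_injOn Φ
  · intro H hH
    rw [mem_coe, Fintype.mem_piFinset]
    rintro ⟨A, hA⟩
    have hA' : A.card = r - 1 := (mem_powersetCard.1 hA).2
    simp only [TT, mem_filter, mem_univ, true_and, Φ]
    rw [card_le_one]
    intro x hx y hy
    simp only [mem_filter, mem_univ, true_and] at hx hy
    rcases lt_trichotomy x y with h | h | h
    · exact (hQ H hH A hA' x y hx.1.1 h hy.2 hx.1.2 hy.1.2).elim
    · exact h
    · exact (hQ H hH A hA' y x hy.1.1 h hx.2 hy.1.2 hx.1.2).elim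
  · have aux : ∀ H ∈ Q, ∀ H' ∈ Q, Φ H = Φ H' → H ⊆ H' := by
      intro H hH H' hH' h e he
      have hec := hc H hH e he
      have hne : e.Nonempty := card_pos.1 (by omega)
      have hmem := e.max'_mem hne
      have hA : e.erase (e.max' hne) ∈ P := by
        rw [mem_powersetCard]
        exact ⟨subset_univ _, by rw [card_erase_of_mem hmem, hec]⟩
      have h3 := congrFun h ⟨_, hA⟩
      have h4 : e.max' hne ∈ Φ H ⟨_, hA⟩ := by
        simp only [Φ, mem_filter, mem_univ, true_and]
        refine ⟨?_, ?_⟩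
        · intro a ha
          exact lt_of_le_of_ne (e.le_max' a (mem_of_mem_erase ha)) (ne_of_mem_erase ha)
        · rwa [insert_erase hmem]
      rw [h3] at h4
      simp only [Φ, mem_filter, mem_univ, true_and] at h4
      have h5 := h4.2
      rwa [insert_erase hmem] at h5
    intro H hH H' hH' h
    exact (aux H hH H' hH' h).antisymm (aux H' hH' H hH h.symm)

lemma numFree_nat (n r k : ℕ) (hr : 2 ≤ r) (hk : r < k) (hn : k ≤ n)
    (L : Finset ℕ) (hgood : ThreeGood k r L) :
    numFree n r k L ≤ (2 ^ (2 * k) * n) ^ (n ^ (r - 1)) := by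
  obtain ⟨l, hl, hlm⟩ := exists_list n r
  have hnd : l.Nodup := hl.imp (fun {a b} h => by
    rintro rfl
    exact lt_irrefl _ h)
  have h1 := osh_card l hnd ((rGraphs n r).filter (IsLKFree n k L)) (by
    intro G hG G' hG' h
    simp only [mem_filter, rGraphs, mem_powerset] at hG hG'
    ext e
    by_cases he : e.card = r
    · exact h e ((hlm e).2 he)
    · exact ⟨fun g => absurd (mem_powersetCard.1 (hG.1 g)).2 he,
        fun g => absurd (mem_powersetCard.1 (hG'.1 g)).2 he⟩)
  have h2 := family_card n r (n - (k - r - 1)) hr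
    (osh l ((rGraphs n r).filter (IsLKFree n k L)))
    (fun H hH e he => (hlm e).1 (osh_sub _ _ _ hH e he))
    (fun H hH A hA x y a b c d e =>
      key_no_pair n r k hr hk hn L hgood l hl hlm H hH A hA x y a b c d e)
  have h3 := TT_card n (n - (k - r - 1))
  have h4 : (n + 1) * 2 ^ (n - (n - (k - r - 1))) ≤ 2 ^ (2 * k) * n := by
    calc (n + 1) * 2 ^ (n - (n - (k - r - 1))) ≤ (2 * n) * 2 ^ (2 * k - 1) := by
          apply Nat.mul_le_mul (by omega)
          apply Nat.pow_le_pow_right (by norm_num)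
          omega
      _ = 2 ^ (2 * k - 1 + 1) * n := by ring
      _ = 2 ^ (2 * k) * n := by
          congr 2
          omega
  unfold numFree
  refine h1.trans (h2.trans ?_)
  refine (Nat.pow_le_pow_left (h3.trans h4) _).trans ?_
  apply Nat.pow_le_pow_right
  · have : 0 < n := by omega
    positivity
  · exact Nat.choose_le_pow _ _

/-- Theorem (main counting): for `n ≥ k > r ≥ 2` and a 3-good list
`L ⊆ {0,1,…,C(k,r)}`, we have `f(n,r,k,L) ≤ 2^(2k·n^(r-1) + n^(r-1)·log₂ n)`. -/
theorem mainCounting (n r k : ℕ) (hr : 2 ≤ r) (hk : r < k) (hn : k ≤ n)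
    (L : Finset ℕ) (hL : L ⊆ Finset.range (Nat.choose k r + 1))
    (hgood : ThreeGood k r L) :
    (numFree n r k L : ℝ) ≤
      (2 : ℝ) ^ (2 * (k : ℝ) * (n : ℝ) ^ (r - 1) + (n : ℝ) ^ (r - 1) * Real.logb 2 n) := by
  have h := numFree_nat n r k hr hk hn L hgood
  have hn0 : (0 : ℝ) < n := by
    have : 0 < n := by omega
    exact_mod_cast this
  have h' : (numFree n r k L : ℝ) ≤ ((2 ^ (2 * k) * n) ^ (n ^ (r - 1)) : ℝ) := by
    exact_mod_cast h
  refine h'.trans (le_of_eq ?_)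
  have e : 2 * (k : ℝ) * (n : ℝ) ^ (r - 1) + (n : ℝ) ^ (r - 1) * Real.logb 2 n
      = (((2 * k : ℕ) : ℝ) + Real.logb 2 n) * ((n ^ (r - 1) : ℕ) : ℝ) := by
    push_cast
    ring
  rw [e, Real.rpow_mul (by norm_num), Real.rpow_natCast, Real.rpow_add (by norm_num),
    Real.rpow_natCast, Real.rpow_logb (by norm_num) (by norm_num) hn0]
end

section
/- There exist real constants c > 0, C > 0 and a natural number n₀ such that for all n ≥ n₀: 2^{c·n²·log₂ n} ≤ f(n,3,4,{1,4}) ≤ 2^{C·n²·log₂ n}. (A 3-graph is ({1,4},4)-free exactly when it is induced {K₄³, E₁}-free, i.e., no 4 vertices span exactly 1 or exactly 4 edges.) -/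
open Finset

lemma count4 {V : Type*} [DecidableEq V] (G : Finset (Finset V)) (hG : ∀ e ∈ G, e.card = 3)
    {a b c d : V} (hab : a ≠ b) (hac : a ≠ c) (had : a ≠ d) (hbc : b ≠ c) (hbd : b ≠ d)
    (hcd : c ≠ d) :
    (G.filter (fun e => e ⊆ {a, b, c, d})).card =
      (if ({a, b, c} : Finset V) ∈ G then 1 else 0) + (if ({a, b, d} : Finset V) ∈ G then 1 else 0)
      + (if ({a, c, d} : Finset V) ∈ G then 1 else 0)
      + (if ({b, c, d} : Finset V) ∈ G then 1 else 0) := by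
  have h1 : G.filter (fun e => e ⊆ {a, b, c, d}) =
      ({{a, b, c}, {a, b, d}, {a, c, d}, {b, c, d}} : Finset (Finset V)).filter (· ∈ G) := by
    ext e
    simp only [mem_filter, mem_insert, mem_singleton]
    constructor
    · rintro ⟨he, hs⟩
      refine ⟨?_, he⟩
      have hc4 : ({a, b, c, d} : Finset V).card = 4 := by
        rw [card_insert_of_notMem, card_insert_of_notMem, card_pair hcd] <;> simp [*]
      have h3 := hG e he
      have : (({a, b, c, d} : Finset V) \ e).card = 1 := by
        rw [card_sdiff_of_subset hs, hc4, h3]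
      obtain ⟨x, hx⟩ := card_eq_one.1 this
      have hex : e = ({a, b, c, d} : Finset V) \ {x} := by
        rw [← hx, sdiff_sdiff_right_self]
        exact (inf_eq_right.2 hs).symm
      have hxm : x ∈ ({a, b, c, d} : Finset V) := by
        have : x ∈ ({a, b, c, d} : Finset V) \ e := by rw [hx]; simp
        exact (mem_sdiff.1 this).1
      simp only [mem_insert, mem_singleton] at hxm
      rcases hxm with rfl | rfl | rfl | rfl
      · right; right; right; rw [hex]; ext y; simp; grind
      · right; right; left; rw [hex]; ext y; simp; grind
      · right; left; rw [hex]; ext y; simp; grind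
      · left; rw [hex]; ext y; simp; grind
    · rintro ⟨h, he⟩
      refine ⟨he, ?_⟩
      rcases h with rfl | rfl | rfl | rfl <;> intro y <;> simp <;> tauto
  have n1 : ({a, b, c} : Finset V) ≠ {a, b, d} := fun h => by
    have : c ∈ ({a, b, d} : Finset V) := h ▸ (by simp)
    simp at this; grind
  have n2 : ({a, b, c} : Finset V) ≠ {a, c, d} := fun h => by
    have : b ∈ ({a, c, d} : Finset V) := h ▸ (by simp)
    simp at this; grind
  have n3 : ({a, b, c} : Finset V) ≠ {b, c, d} := fun h => by
    have : a ∈ ({b, c, d} : Finset V) := h ▸ (by simp)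
    simp at this; grind
  have n4 : ({a, b, d} : Finset V) ≠ {a, c, d} := fun h => by
    have : b ∈ ({a, c, d} : Finset V) := h ▸ (by simp)
    simp at this; grind
  have n5 : ({a, b, d} : Finset V) ≠ {b, c, d} := fun h => by
    have : a ∈ ({b, c, d} : Finset V) := h ▸ (by simp)
    simp at this; grind
  have n6 : ({a, c, d} : Finset V) ≠ {b, c, d} := fun h => by
    have : a ∈ ({b, c, d} : Finset V) := h ▸ (by simp)
    simp at this; grind
  rw [h1, card_filter, sum_insert (by simp [n1, n2, n3]), sum_insert (by simp [n4, n5]),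
    sum_insert (by simp [n6]), sum_singleton]
  ring

lemma forest_card {V : Type*} [Fintype V] [DecidableEq V] [Nonempty V] (s : Finset (Sym2 V))
    (hd : ∀ e ∈ s, ¬ e.IsDiag)
    (hac : (SimpleGraph.fromEdgeSet (s : Set (Sym2 V))).IsAcyclic) : s.card ≤ Fintype.card V := by
  classical
  obtain ⟨T, hle, -, hT⟩ := (SimpleGraph.connected_top (V := V)).exists_isTree_le_of_le_of_isAcyclic
    (le_top : SimpleGraph.fromEdgeSet (s : Set (Sym2 V)) ≤ ⊤) hac
  have h := hT.card_edgeFinset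
  have : s ⊆ T.edgeFinset := by
    intro e he
    rw [SimpleGraph.mem_edgeFinset]
    apply SimpleGraph.edgeSet_mono hle
    rw [SimpleGraph.edgeSet_fromEdgeSet]
    exact ⟨he, hd e he⟩
  have := card_le_card this
  omega

lemma force_path {V : Type*} [DecidableEq V] (W : Finset V) (𝒜 : Finset (Finset (Sym2 V)))
    (hW : ∀ x ∈ W, ∀ y ∈ W, ∀ z ∈ W, x ≠ y → x ≠ z → y ≠ z → ∀ β : Prop, ∃ p q : Prop, ∀ u ∈ 𝒜,
      (s(x, y) ∈ u ↔ p) → (s(y, z) ∈ u ↔ q) → (s(x, z) ∈ u ↔ β))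
    (G : SimpleGraph V) (hG : ∀ x y, G.Adj x y → x ∈ W ∧ y ∈ W) {x z : V} (p : G.Walk x z)
    (hp : p.IsPath) (hxz : x ≠ z) (β : Prop) :
    ∃ φ : Sym2 V → Prop, ∀ u ∈ 𝒜, (∀ e ∈ p.edges, (e ∈ u ↔ φ e)) → (s(x, z) ∈ u ↔ β) := by
  induction p generalizing β with
  | nil => exact absurd rfl hxz
  | @cons x y z h p ih =>
    by_cases hyz : y = z
    · subst hyz
      exact ⟨fun _ => β, fun u hu H => H _ (by simp)⟩
    · have hp' := (SimpleGraph.Walk.cons_isPath_iff _ _).1 hp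
      have hzW : z ∈ W := by
        cases hq : p.reverse with
        | nil => exact absurd rfl hyz
        | cons h' _ => exact (hG _ _ h').1
      obtain ⟨hx, hy⟩ := hG _ _ h
      obtain ⟨a, b, hab⟩ := hW x hx y hy z hzW h.ne hxz hyz β
      obtain ⟨φ, hφ⟩ := ih hp'.1 hyz b
      refine ⟨Function.update φ s(x, y) a, fun u hu H => ?_⟩
      apply hab u hu
      · have := H s(x, y) (by simp)
        simpa using this
      · apply hφ u hu
        intro e he
        have hne : e ≠ s(x, y) := by
          rintro rfl
          exact hp'.2 (SimpleGraph.Walk.fst_mem_support_of_mem_edges _ he)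
        have := H e (by simp [he])
        rwa [Function.update_of_ne hne] at this

lemma shatter_acyclic {V : Type*} [DecidableEq V] (W : Finset V) (𝒜 : Finset (Finset (Sym2 V)))
    (hW : ∀ x ∈ W, ∀ y ∈ W, ∀ z ∈ W, x ≠ y → x ≠ z → y ≠ z → ∀ β : Prop, ∃ p q : Prop, ∀ u ∈ 𝒜,
      (s(x, y) ∈ u ↔ p) → (s(y, z) ∈ u ↔ q) → (s(x, z) ∈ u ↔ β))
    (hV : ∀ u ∈ 𝒜, ∀ x y, s(x, y) ∈ u → x ∈ W ∧ y ∈ W)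
    (s : Finset (Sym2 V)) (hs : 𝒜.Shatters s) :
    (SimpleGraph.fromEdgeSet (s : Set (Sym2 V))).IsAcyclic := by
  classical
  rw [SimpleGraph.isAcyclic_iff_forall_adj_isBridge]
  intro v w hvw
  rw [SimpleGraph.isBridge_iff_forall_walk_mem_edges]
  intro p
  by_contra hne
  have hne' : s(v, w) ∉ p.bypass.edges := fun h => hne (p.edges_bypass_subset_edges h)
  obtain ⟨u₀, hu₀, hsu⟩ := hs.exists_superset
  obtain ⟨φ, hφ⟩ := force_path W 𝒜 hW _ (fun x y hxy => by
    rw [SimpleGraph.fromEdgeSet_adj] at hxy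
    exact hV u₀ hu₀ x y (hsu hxy.1)) p.bypass p.bypass_isPath hvw.ne False
  obtain ⟨u, hu, hsu⟩ := hs (t := s.filter (fun e => e = s(v, w) ∨ φ e ∧ e ≠ s(v,w))) (filter_subset _ _)
  have key : ∀ e ∈ s, (e ∈ u ↔ e = s(v, w) ∨ φ e ∧ e ≠ s(v,w)) := by
    intro e he
    have := congrArg (e ∈ ·) hsu
    simpa [he] using this
  have hin : s(v, w) ∈ s := by
    rw [SimpleGraph.fromEdgeSet_adj] at hvw
    exact hvw.1
  refine (hφ u hu ?_).1 ((key _ hin).2 (Or.inl rfl))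
  intro e he
  have hes : e ∈ s := by
    have := p.bypass.edges_subset_edgeSet he
    rw [SimpleGraph.edgeSet_fromEdgeSet] at this
    exact this.1
  have : e ≠ s(v, w) := fun h => hne' (h ▸ he)
  rw [key e hes]; simp [this]

lemma card_small_sets {α : Type*} [Fintype α] [DecidableEq α] (n : ℕ)
    (F : Finset (Finset α)) (hF : ∀ s ∈ F, s.card ≤ n) :
    F.card ≤ (Fintype.card α + 1) ^ n := by
  classical
  have : F ⊆ (univ : Finset (Fin n → Option α)).image (fun g => eraseNone (univ.image g)) := by
    intro s hs
    rw [mem_image]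
    refine ⟨fun i => s.toList[(i : ℕ)]?, mem_univ _, ?_⟩
    ext a
    simp only [mem_eraseNone, mem_image, mem_univ, true_and]
    rw [← mem_toList (s := s), List.mem_iff_getElem?]
    constructor
    · rintro ⟨i, hi⟩; exact ⟨i, hi⟩
    · rintro ⟨i, hi⟩
      have := (List.getElem?_eq_some_iff.1 hi).1
      rw [length_toList] at this
      exact ⟨⟨i, this.trans_le (hF s hs)⟩, hi⟩
  refine (card_le_card this).trans (card_image_le.trans ?_)
  simp

/-- Free 3-graphs inside `W`. -/
def FreeIn (n : ℕ) (W : Finset (Fin n)) : Finset (Finset (Finset (Fin n))) :=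
  (rGraphs n 3).filter (fun G => (∀ e ∈ G, e ⊆ W) ∧
    ∀ S : Finset (Fin n), S ⊆ W → S.card = 4 → (G.filter (fun e => e ⊆ S)).card ∉ ({1, 4} : Finset ℕ))

lemma mem_FreeIn {n : ℕ} {W : Finset (Fin n)} {G : Finset (Finset (Fin n))} :
    G ∈ FreeIn n W ↔ (∀ e ∈ G, e.card = 3) ∧ (∀ e ∈ G, e ⊆ W) ∧
    ∀ S : Finset (Fin n), S ⊆ W → S.card = 4 →
      (G.filter (fun e => e ⊆ S)).card ∉ ({1, 4} : Finset ℕ) := by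
  simp only [FreeIn, rGraphs, mem_filter, mem_powerset, subset_iff, mem_powersetCard, mem_univ]
  simp

/-- The link of `v`. -/
def lk {n : ℕ} (v : Fin n) (G : Finset (Finset (Fin n))) : Finset (Sym2 (Fin n)) :=
  univ.filter (fun e => insert v e.toFinset ∈ G)

lemma mem_lk {n : ℕ} (v : Fin n) (G : Finset (Finset (Fin n))) (x y : Fin n) :
    s(x, y) ∈ lk v G ↔ {v, x, y} ∈ G := by
  simp [lk, Sym2.toFinset_mk_eq]

lemma fiber_bound {n : ℕ} (W : Finset (Fin n)) (v : Fin n) (hv : v ∉ W)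
    (H : Finset (Finset (Fin n))) :
    ((FreeIn n (insert v W)).filter (fun G => G.filter (fun e => e ⊆ W) = H)).card
      ≤ (n ^ 2 + n + 1) ^ n := by
  classical
  set F := (FreeIn n (insert v W)).filter (fun G => G.filter (fun e => e ⊆ W) = H) with hF
  have hinj : Set.InjOn (lk v) (F : Set (Finset (Finset (Fin n)))) := by
    intro G hG G' hG' h
    have main : ∀ G ∈ F, ∀ G' ∈ F, lk v G = lk v G' → G ⊆ G' := by
      intro G hG G' hG' h e he
      rw [hF, mem_filter, mem_FreeIn] at hG hG'
      by_cases hve : v ∈ e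
      · have h2 : (e.erase v).card = 2 := by rw [card_erase_of_mem hve, hG.1.1 e he]
        obtain ⟨x, y, hxy, hexy⟩ := card_eq_two.1 h2
        have : e = {v, x, y} := by rw [← hexy, insert_erase hve]
        rw [this, ← mem_lk, ← h, mem_lk, ← this]; exact he
      · have : e ⊆ W := by
          intro a ha
          have := hG.1.2.1 e he ha
          rw [mem_insert] at this
          rcases this with rfl | h
          · exact absurd ha hve
          · exact h
        have : e ∈ G'.filter (fun e => e ⊆ W) := by
          rw [hG'.2, ← hG.2]; exact mem_filter.2 ⟨he, this⟩
        exact (mem_filter.1 this).1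
    exact Subset.antisymm (main G hG G' hG' h) (main G' hG' G hG h.symm)
  rw [← card_image_of_injOn hinj]
  set 𝒜 := F.image (lk v) with h𝒜
  refine (card_le_card_shatterer 𝒜).trans ?_
  have : Nonempty (Fin n) := ⟨v⟩
  have hfacts : ∀ u ∈ 𝒜, ∀ x y, s(x, y) ∈ u → x ∈ W ∧ y ∈ W ∧ x ≠ y := by
    intro u hu x y hxy
    rw [h𝒜, mem_image] at hu
    obtain ⟨G, hG, rfl⟩ := hu
    rw [mem_lk] at hxy
    rw [hF, mem_filter, mem_FreeIn] at hG
    have h3 := hG.1.1 _ hxy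
    have hs := hG.1.2.1 _ hxy
    have hx := hs (show x ∈ _ by simp)
    have hy := hs (show y ∈ _ by simp)
    rw [mem_insert] at hx hy
    have hxy : x ≠ y := by
      rintro rfl
      have := card_le_two (a := v) (b := x)
      simp at h3; omega
    have hxv : x ≠ v := by
      rintro rfl
      have := card_le_two (a := x) (b := y)
      simp at h3; omega
    have hyv : y ≠ v := by
      rintro rfl
      have := card_le_two (a := x) (b := y)
      rw [insert_comm] at h3
      simp at h3; omega
    tauto
  have hW : ∀ x ∈ W, ∀ y ∈ W, ∀ z ∈ W, x ≠ y → x ≠ z → y ≠ z → ∀ β : Prop,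
      ∃ p q : Prop, ∀ u ∈ 𝒜,
      (s(x, y) ∈ u ↔ p) → (s(y, z) ∈ u ↔ q) → (s(x, z) ∈ u ↔ β) := by
    intro x hx y hy z hz hxy hxz hyz β
    have key : ∀ u ∈ 𝒜, (if s(x, y) ∈ u then 1 else 0) + (if s(x, z) ∈ u then 1 else 0) +
        (if s(y, z) ∈ u then 1 else 0) + (if {x, y, z} ∈ H then 1 else 0) ∉ ({1, 4} : Finset ℕ) := by
      intro u hu
      rw [h𝒜, mem_image] at hu
      obtain ⟨G, hG, rfl⟩ := hu
      rw [hF, mem_filter, mem_FreeIn] at hG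
      have hvx : v ≠ x := by rintro rfl; exact hv hx
      have hvy : v ≠ y := by rintro rfl; exact hv hy
      have hvz : v ≠ z := by rintro rfl; exact hv hz
      have hH : {x, y, z} ∈ H ↔ {x, y, z} ∈ G := by
        rw [← hG.2, mem_filter]
        simp [insert_subset_iff, hx, hy, hz]
      simp only [mem_lk, hH]
      rw [← count4 G hG.1.1 hvx hvy hvz hxy hxz hyz]
      apply hG.1.2.2
      · intro a; simp; grind
      · rw [card_insert_of_notMem, card_insert_of_notMem, card_pair hyz] <;> simp [*]
    by_cases hh : {x, y, z} ∈ H <;> by_cases hβ : β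
    · refine ⟨False, False, fun u hu h1 h2 => ?_⟩
      have := key u hu
      clear key hfacts hinj
      by_cases hq : s(x, z) ∈ u <;> simp_all
    · refine ⟨True, True, fun u hu h1 h2 => ?_⟩
      have := key u hu
      clear key hfacts hinj
      by_cases hq : s(x, z) ∈ u <;> simp_all
    · refine ⟨True, False, fun u hu h1 h2 => ?_⟩
      have := key u hu
      clear key hfacts hinj
      by_cases hq : s(x, z) ∈ u <;> simp_all
    · refine ⟨False, False, fun u hu h1 h2 => ?_⟩
      have := key u hu
      clear key hfacts hinj
      by_cases hq : s(x, z) ∈ u <;> simp_all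
  refine (card_small_sets n _ ?_).trans ?_
  · intro s hs
    rw [mem_shatterer] at hs
    have := forest_card s ?_ (shatter_acyclic W 𝒜 hW
      (fun u hu x y h => ⟨(hfacts u hu x y h).1, (hfacts u hu x y h).2.1⟩) s hs)
    · simpa using this
    · obtain ⟨u, hu, hsu⟩ := hs.exists_superset
      intro e he
      induction e using Sym2.ind with
      | _ x y => simpa using (hfacts u hu x y (hsu he)).2.2
  · apply Nat.pow_le_pow_left
    have : Fintype.card (Sym2 (Fin n)) ≤ n ^ 2 + n := by
      rw [Sym2.card]
      rw [Fintype.card_fin, Nat.choose_two_right]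
      refine (Nat.div_le_self _ _).trans ?_
      simp; nlinarith
    omega

lemma FreeIn_bound (n : ℕ) (W : Finset (Fin n)) :
    (FreeIn n W).card ≤ ((n ^ 2 + n + 1) ^ n) ^ W.card := by
  classical
  induction W using Finset.induction_on with
  | empty =>
    rw [card_empty, pow_zero, card_le_one]
    have : ∀ G ∈ FreeIn n ∅, G = ∅ := by
      intro G hG
      rw [mem_FreeIn] at hG
      rw [eq_empty_iff_forall_notMem]
      intro e he
      have h1 := hG.1 e he
      have h2 := subset_empty.1 (hG.2.1 e he)
      simp [h2] at h1
    intro a ha b hb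
    rw [this a ha, this b hb]
  | insert v W hv ih =>
    rw [card_insert_of_notMem hv, pow_succ]
    have hmap : ∀ G ∈ FreeIn n (insert v W), G.filter (fun e => e ⊆ W) ∈ FreeIn n W := by
      intro G hG
      rw [mem_FreeIn] at hG ⊢
      refine ⟨fun e he => hG.1 e (mem_filter.1 he).1, fun e he => (mem_filter.1 he).2, ?_⟩
      intro S hS h4
      have := hG.2.2 S (hS.trans (subset_insert _ _)) h4
      rw [filter_filter]
      convert this using 3
      ext e
      rw [mem_filter, mem_filter]
      exact ⟨fun h => ⟨h.1, h.2.2⟩, fun h => ⟨h.1, h.2.trans hS, h.2⟩⟩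
    have := card_le_mul_card_image_of_maps_to hmap ((n ^ 2 + n + 1) ^ n)
      (fun H _ => fiber_bound W v hv H)
    rw [mul_comm] at this
    exact this.trans (Nat.mul_le_mul_right _ ih)

lemma upper_nat (n : ℕ) : numFree n 3 4 {1, 4} ≤ ((n ^ 2 + n + 1) ^ n) ^ n := by
  have h := FreeIn_bound n univ
  rw [card_univ, Fintype.card_fin] at h
  refine le_trans (card_le_card ?_) h
  intro G hG
  rw [mem_filter] at hG
  unfold FreeIn
  rw [mem_filter]
  exact ⟨hG.1, fun e _ => subset_univ _, fun S _ => hG.2 S⟩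

/-- The ordered edge relation of the construction. -/
def RQ {V : Type*} (col : V → Fin 3) (Q : V → V → V → Prop) (x y z : V) : Prop :=
  (col x = 0 ∧ col y = 1 ∧ col z = 2 ∧ ¬ Q x y z) ∨ (col x = col y ∧ col z = col x + 1)

open Classical in
/-- The construction. -/
noncomputable def GQ (n : ℕ) (col : Fin n → Fin 3) (Q : Fin n → Fin n → Fin n → Prop) :
    Finset (Finset (Fin n)) :=
  (Finset.univ.powersetCard 3).filter (fun e => ∃ x y z, e = {x, y, z} ∧ RQ col Q x y z)

lemma triple_eq {V : Type*} [DecidableEq V] {a b c x y z : V} (hab : a ≠ b) (hac : a ≠ c)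
    (hbc : b ≠ c) (h : ({a, b, c} : Finset V) = {x, y, z}) :
    (x = a ∧ y = b ∧ z = c) ∨ (x = a ∧ y = c ∧ z = b) ∨ (x = b ∧ y = a ∧ z = c) ∨
    (x = b ∧ y = c ∧ z = a) ∨ (x = c ∧ y = a ∧ z = b) ∨ (x = c ∧ y = b ∧ z = a) := by
  have ha : a ∈ ({x, y, z} : Finset V) := h ▸ (by simp)
  have hb : b ∈ ({x, y, z} : Finset V) := h ▸ (by simp)
  have hc : c ∈ ({x, y, z} : Finset V) := h ▸ (by simp)
  simp only [mem_insert, mem_singleton] at ha hb hc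
  grind

lemma mem_GQ {n : ℕ} {col : Fin n → Fin 3} {Q : Fin n → Fin n → Fin n → Prop} {a b c : Fin n}
    (hab : a ≠ b) (hac : a ≠ c) (hbc : b ≠ c) :
    {a, b, c} ∈ GQ n col Q ↔ RQ col Q a b c ∨ RQ col Q a c b ∨ RQ col Q b a c ∨
      RQ col Q b c a ∨ RQ col Q c a b ∨ RQ col Q c b a := by
  have h3 : ({a, b, c} : Finset (Fin n)).card = 3 := card_eq_three.2 ⟨a, b, c, hab, hac, hbc, rfl⟩
  simp only [GQ, mem_filter, mem_powersetCard, subset_univ, h3, true_and]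
  constructor
  · rintro ⟨x, y, z, h, hR⟩
    rcases triple_eq hab hac hbc h with ⟨rfl, rfl, rfl⟩ | ⟨rfl, rfl, rfl⟩ | ⟨rfl, rfl, rfl⟩ |
      ⟨rfl, rfl, rfl⟩ | ⟨rfl, rfl, rfl⟩ | ⟨rfl, rfl, rfl⟩ <;> tauto
  · rintro (h | h | h | h | h | h)
    · exact ⟨_, _, _, rfl, h⟩
    · exact ⟨_, _, _, by ext; simp; tauto, h⟩
    · exact ⟨_, _, _, by ext; simp; tauto, h⟩
    · exact ⟨_, _, _, by ext; simp; tauto, h⟩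
    · exact ⟨_, _, _, by ext; simp; tauto, h⟩
    · exact ⟨_, _, _, by ext; simp; tauto, h⟩

lemma GQ_free {n : ℕ} {col : Fin n → Fin 3} {Q : Fin n → Fin n → Fin n → Prop}
    (h1 : ∀ x y z z', Q x y z → Q x y z' → z = z')
    (h2 : ∀ x y y' z, Q x y z → Q x y' z → y = y')
    (h3 : ∀ x x' y z, Q x y z → Q x' y z → x = x') :
    GQ n col Q ∈ (rGraphs n 3).filter (IsLKFree n 4 {1, 4}) := by
  have hc : ∀ e ∈ GQ n col Q, e.card = 3 := by
    intro e he
    simp only [GQ, mem_filter, mem_powersetCard] at he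
    exact he.1.2
  rw [mem_filter]
  constructor
  · rw [rGraphs, mem_powerset]
    intro e he
    rw [mem_powersetCard]; exact ⟨subset_univ _, hc e he⟩
  · intro S hS
    obtain ⟨a, T, haT, rfl, hT⟩ := card_eq_succ.1 hS
    obtain ⟨b, c, d, hbc, hbd, hcd, rfl⟩ := card_eq_three.1 hT
    have hab : a ≠ b := by rintro rfl; simp at haT
    have hac : a ≠ c := by rintro rfl; simp at haT
    have had : a ≠ d := by rintro rfl; simp at haT
    rw [count4 _ hc hab hac had hbc hbd hcd]
    have m1 := mem_GQ (col := col) (Q := Q) hab hac hbc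
    have m2 := mem_GQ (col := col) (Q := Q) hab had hbd
    have m3 := mem_GQ (col := col) (Q := Q) hac had hcd
    have m4 := mem_GQ (col := col) (Q := Q) hbc hbd hcd
    have e3 : ∀ i : Fin 3, i = 0 ∨ i = 1 ∨ i = 2 := by decide
    have s01 : (0 : Fin 3) + 1 = 1 := rfl
    have s12 : (1 : Fin 3) + 1 = 2 := rfl
    have s20 : (2 : Fin 3) + 1 = 0 := rfl
    have d01 : (0 : Fin 3) ≠ 1 := by decide
    have d02 : (0 : Fin 3) ≠ 2 := by decide
    have d12 : (1 : Fin 3) ≠ 2 := by decide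
    have d20 : (2 : Fin 3) ≠ 0 := by decide
    have d21 : (2 : Fin 3) ≠ 1 := by decide
    have d10 : (1 : Fin 3) ≠ 0 := by decide
    unfold RQ at m1 m2 m3 m4
    clear hS hT haT hc
    rw [mem_insert, mem_singleton]
    rcases e3 (col a) with ha | ha | ha <;> rcases e3 (col b) with hb | hb | hb <;>
    rcases e3 (col c) with hc | hc | hc <;> rcases e3 (col d) with hd | hd | hd <;>
    simp only [ha, hb, hc, hd, s01, s12, s20, d01, d02, d12, d20, d21, d10, true_and, and_true,
      false_and, and_false, or_false, false_or, or_true, true_or, and_self, or_self, iff_true,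
      iff_false] at m1 m2 m3 m4 <;>
    simp only [m1, m2, m3, m4, if_true, if_false] <;> first | omega | (split_ifs <;> grind)

lemma greedy (k m : ℕ) (hm : 3 * k ≤ m) (d : Fin m) (S : Finset (Fin k × Fin k)) :
    k ^ S.card ≤ ((univ : Finset (Fin k × Fin k → Fin m)).filter (fun g =>
      (∀ p ∈ S, ∀ q ∈ S, p ≠ q → (p.1 = q.1 ∨ p.2 = q.2) → g p ≠ g q) ∧
      ∀ p, p ∉ S → g p = d)).card := by
  classical
  induction S using Finset.induction_on with
  | empty =>
    rw [card_empty, pow_zero, Nat.one_le_iff_ne_zero, ← Nat.pos_iff_ne_zero, card_pos]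
    exact ⟨fun _ => d, by simp⟩
  | insert x S hx ih =>
    set N := (univ : Finset (Fin k × Fin k → Fin m)).filter (fun g =>
      (∀ p ∈ S, ∀ q ∈ S, p ≠ q → (p.1 = q.1 ∨ p.2 = q.2) → g p ≠ g q) ∧
      ∀ p, p ∉ S → g p = d) with hN
    let nb : Finset (Fin k × Fin k) :=
      (univ.image (fun j => (x.1, j))) ∪ (univ.image (fun i => (i, x.2)))
    have hnb : nb.card ≤ 2 * k := by
      refine (card_union_le _ _).trans ?_
      have h1 := card_image_le (s := (univ : Finset (Fin k))) (f := fun j => (x.1, j))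
      have h2 := card_image_le (s := (univ : Finset (Fin k))) (f := fun i => (i, x.2))
      rw [card_univ, Fintype.card_fin] at h1 h2
      omega
    let al : (Fin k × Fin k → Fin m) → Finset (Fin m) := fun g => univ \ nb.image g
    have hal : ∀ g, k ≤ (al g).card := by
      intro g
      have h1 : (nb.image g).card ≤ 2 * k := card_image_le.trans hnb
      have h2 := le_card_sdiff (nb.image g) (univ : Finset (Fin m))
      rw [card_univ, Fintype.card_fin] at h2
      change k ≤ (univ \ nb.image g).card
      omega
    have hsig : k ^ (insert x S).card ≤ (N.sigma al).card := by
      rw [card_insert_of_notMem hx, pow_succ, card_sigma]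
      calc k ^ S.card * k ≤ N.card * k := Nat.mul_le_mul_right _ ih
        _ = ∑ _g ∈ N, k := by simp
        _ ≤ _ := sum_le_sum (fun g _ => hal g)
    refine hsig.trans (card_le_card_of_injOn (fun t => Function.update t.1 x t.2) ?_ ?_)
    · rintro ⟨g, c⟩ hgc
      rw [mem_coe, mem_sigma] at hgc
      obtain ⟨hg, hc⟩ := hgc
      rw [hN, mem_filter] at hg
      have hc' : ∀ q, (x.1 = q.1 ∨ x.2 = q.2) → g q ≠ c := by
        intro q hq h
        have : c ∈ nb.image g := by
          rw [mem_image]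
          refine ⟨q, ?_, h⟩
          simp only [nb, mem_union, mem_image, mem_univ, true_and]
          rcases hq with hq | hq
          · left; exact ⟨q.2, by rw [hq]⟩
          · right; exact ⟨q.1, by rw [hq]⟩
        exact (mem_sdiff.1 hc).2 this
      simp only [coe_filter, mem_univ, true_and, Set.mem_setOf_eq]
      constructor
      · intro p hp q hq hpq hl
        rw [mem_insert] at hp hq
        by_cases hpx : p = x
        · subst hpx
          rw [Function.update_self, Function.update_of_ne (Ne.symm hpq)]
          exact (hc' q hl).symm
        · by_cases hqx : q = x
          · subst hqx
            rw [Function.update_self, Function.update_of_ne hpq]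
            exact hc' p (hl.imp Eq.symm Eq.symm)
          · rw [Function.update_of_ne hpx, Function.update_of_ne hqx]
            exact hg.2.1 p (hp.resolve_left hpx) q (hq.resolve_left hqx) hpq hl
      · intro p hp
        rw [mem_insert, not_or] at hp
        rw [Function.update_of_ne hp.1]
        exact hg.2.2 p hp.2
    · rintro ⟨g, c⟩ hg ⟨g', c'⟩ hg' h
      rw [mem_coe, mem_sigma, hN, mem_filter] at hg hg'
      simp only at h hg hg'
      have hcc : c = c' := by
        have := congrFun h x
        simpa using this
      have hgg : g = g' := by
        funext p
        by_cases hp : p = x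
        · subst hp
          rw [hg.1.2.2 p hx, hg'.1.2.2 p hx]
        · have := congrFun h p
          rwa [Function.update_of_ne hp, Function.update_of_ne hp] at this
      subst hcc; subst hgg; rfl

/-- Partial Latin relation. -/
def QL {n k m : ℕ} (g : Fin k × Fin k → Fin m) (x y z : Fin n) : Prop :=
  ∃ i j : Fin k, (x : ℕ) = i ∧ (y : ℕ) = k + j ∧ (z : ℕ) = 2 * k + g (i, j)

/-- Colouring. -/
def colL (n k : ℕ) (x : Fin n) : Fin 3 :=
  if (x : ℕ) < k then 0 else if (x : ℕ) < 2 * k then 1 else 2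

lemma lower_nat (n k : ℕ) (hk : 0 < k) (hn : 5 * k ≤ n) :
    k ^ (k ^ 2) ≤ numFree n 3 4 {1, 4} := by
  classical
  have hg := greedy k (3 * k) le_rfl ⟨0, by omega⟩ univ
  rw [card_univ, Fintype.card_prod, Fintype.card_fin, ← pow_two] at hg
  refine hg.trans (card_le_card_of_injOn (fun g => GQ n (colL n k) (QL g)) ?_ ?_)
  · intro g hg
    simp only [coe_filter, mem_univ, true_and, Set.mem_setOf_eq, forall_true_left, not_true,
      false_imp_iff, implies_true, and_true] at hg
    rw [mem_coe]
    apply GQ_free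
    · rintro x y z z' ⟨i, j, hx, hy, hz⟩ ⟨i', j', hx', hy', hz'⟩
      obtain rfl : i = i' := Fin.ext (by omega)
      obtain rfl : j = j' := Fin.ext (by omega)
      exact Fin.ext (by omega)
    · rintro x y y' z ⟨i, j, hx, hy, hz⟩ ⟨i', j', hx', hy', hz'⟩
      obtain rfl : i = i' := Fin.ext (by omega)
      by_contra hne
      have hj : j ≠ j' := by
        rintro rfl
        exact hne (Fin.ext (by omega))
      refine hg (i, j) (i, j') (fun h => hj (Prod.mk.inj h).2) (Or.inl rfl) (Fin.ext (by omega))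
    · rintro x x' y z ⟨i, j, hx, hy, hz⟩ ⟨i', j', hx', hy', hz'⟩
      obtain rfl : j = j' := Fin.ext (by omega)
      by_contra hne
      have hj : i ≠ i' := by
        rintro rfl
        exact hne (Fin.ext (by omega))
      refine hg (i, j) (i', j) (fun h => hj (Prod.mk.inj h).1) (Or.inr rfl) (Fin.ext (by omega))
  · intro g _ g' _ h
    simp only at h
    funext ⟨i, j⟩
    have hi := i.2
    have hj := j.2
    have hgb := (g (i, j)).2
    let a : Fin n := ⟨i, by omega⟩
    let b : Fin n := ⟨k + j, by omega⟩
    let c : Fin n := ⟨2 * k + g (i, j), by omega⟩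
    have ca : colL n k a = 0 := by simp [colL, a]
    have cb : colL n k b = 1 := by
      have : k + (j : ℕ) < 2 * k := by omega
      simp [colL, b, this]
    have cc : colL n k c = 2 := by
      have h1 : ¬ (2 * k + (g (i, j) : ℕ) < k) := by omega
      simp [colL, c, h1]
    have hab : a ≠ b := fun h => by rw [h, cb] at ca; exact absurd ca (by decide)
    have hac : a ≠ c := fun h => by rw [h, cc] at ca; exact absurd ca (by decide)
    have hbc : b ≠ c := fun h => by rw [h, cc] at cb; exact absurd cb (by decide)
    have key : ∀ f : Fin k × Fin k → Fin (3 * k),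
        {a, b, c} ∈ GQ n (colL n k) (QL f) ↔ ¬ QL f a b c := by
      intro f
      rw [mem_GQ hab hac hbc]
      simp only [RQ, ca, cb, cc]
      have s12 : (1 : Fin 3) + 1 = 2 := rfl
      simp
    have h1 : QL g a b c := ⟨i, j, rfl, rfl, rfl⟩
    have h2 : QL g' a b c := by
      by_contra h2
      rw [← key g', ← h, key g] at h2
      exact h2 h1
    obtain ⟨i', j', hx, hy, hz⟩ := h2
    simp only [a, b, c] at hx hy hz
    obtain rfl : i = i' := Fin.ext (by omega)
    obtain rfl : j = j' := Fin.ext (by omega)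
    exact Fin.ext (by omega)

/-- Theorem: the number of `({1,4},4)`-free (equivalently, induced `{K₄³, E₁}`-free)
3-graphs on `[n]` is `2^(Θ(n² log₂ n))`. -/
theorem count_K43_E1_free :
    ∃ c C : ℝ, 0 < c ∧ 0 < C ∧ ∃ n₀ : ℕ, ∀ n : ℕ, n₀ ≤ n →
      (2 : ℝ) ^ (c * (n : ℝ) ^ 2 * Real.logb 2 n) ≤ (numFree n 3 4 {1, 4} : ℝ) ∧
      (numFree n 3 4 {1, 4} : ℝ) ≤ (2 : ℝ) ^ (C * (n : ℝ) ^ 2 * Real.logb 2 n) := by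
  refine ⟨1 / 200, 3, by norm_num, by norm_num, 100, fun n hn => ?_⟩
  have hnR : (100 : ℝ) ≤ n := by exact_mod_cast hn
  have hn0 : (0 : ℝ) < n := by linarith
  have hl : 0 ≤ Real.logb 2 n := Real.logb_nonneg (by norm_num) (by linarith)
  have h2 : ∀ t : ℝ, (2 : ℝ) ^ (t * Real.logb 2 n) = (n : ℝ) ^ t := by
    intro t
    rw [mul_comm, Real.rpow_mul (by norm_num), Real.rpow_logb (by norm_num) (by norm_num) hn0]
  rw [h2, h2]
  constructor
  · obtain ⟨k, hk⟩ : ∃ k, k = n / 5 := ⟨_, rfl⟩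
    have hk5 : 5 * k ≤ n := by omega
    have hk10 : n ≤ 10 * k := by omega
    have hkn : n ≤ k ^ 2 := by nlinarith
    have hlow : ((k : ℝ) ^ (k ^ 2)) ≤ (numFree n 3 4 {1, 4} : ℝ) := by
      exact_mod_cast lower_nat n k (by omega) hk5
    refine le_trans ?_ hlow
    have e1 : (n : ℝ) ≤ (k : ℝ) ^ (2 : ℝ) := by
      rw [Real.rpow_two]; exact_mod_cast hkn
    have hk1 : (1 : ℝ) ≤ k := by
      have : 1 ≤ k := by omega
      exact_mod_cast this
    have hkR : (n : ℝ) ≤ 10 * k := by exact_mod_cast hk10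
    calc (n : ℝ) ^ (1 / 200 * (n : ℝ) ^ 2) ≤ ((k : ℝ) ^ (2 : ℝ)) ^ (1 / 200 * (n : ℝ) ^ 2) :=
          Real.rpow_le_rpow hn0.le e1 (by positivity)
      _ = (k : ℝ) ^ (2 * (1 / 200 * (n : ℝ) ^ 2)) := by rw [← Real.rpow_mul (by linarith)]
      _ ≤ (k : ℝ) ^ (((k ^ 2 : ℕ) : ℝ)) := by
          apply Real.rpow_le_rpow_of_exponent_le hk1
          push_cast
          nlinarith
      _ = (k : ℝ) ^ (k ^ 2) := by rw [Real.rpow_natCast]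
  · have hup := upper_nat n
    have hb : n ^ 2 + n + 1 ≤ n ^ 3 := by nlinarith [Nat.mul_le_mul hn hn]
    have : numFree n 3 4 {1, 4} ≤ n ^ (3 * n ^ 2) := by
      refine hup.trans ?_
      rw [← pow_mul, ← pow_two, pow_mul]
      exact Nat.pow_le_pow_left hb _
    calc (numFree n 3 4 {1, 4} : ℝ) ≤ ((n ^ (3 * n ^ 2) : ℕ) : ℝ) := by exact_mod_cast this
      _ = (n : ℝ) ^ (((3 * n ^ 2 : ℕ) : ℝ)) := by rw [Real.rpow_natCast]; push_cast; rfl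
      _ ≤ _ := by push_cast; exact le_rfl
end
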